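/- Let x ≥ 2.355 be a real number. Then for every finite bipartite graph H with minimum degree at least 1, T̃_H(x,0) · T̃_H(0,x) ≥ 1. -/

import Mathlib

open scoped Classical

/-- The permutation Tutte polynomial of a bipartite graph `G` on finite vertex set `V`
with bipartition class `A` (the other class being `Aᶜ`). -/
noncomputable def permTutte {V : Type*} [Fintype V] [DecidableEq V]
    (G : SimpleGraph V) (A : Set V) (x y : ℝ) : ℝ :=
  ((Fintype.card V).factorial : ℝ)⁻¹ *
    ∑ π : V ≃ Fin (Fintype.card V),
      x ^ Nat.card {i : V // i ∈ A ∧ ∀ j, G.Adj i j → π j < π i} *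
      y ^ Nat.card {j : V // j ∉ A ∧ ∀ i, G.Adj j i → π i < π j}

/-- `G` is bipartite with parts `A` and `Aᶜ`. -/
def IsBipartition {V : Type*} (G : SimpleGraph V) (A : Set V) : Prop :=
  ∀ u v, G.Adj u v → (u ∈ A ↔ v ∉ A)

/-!
Label the vertices by independent uniform variables on `(0, 1]`; `T̃(x, 0)` is the expectation of
a product of one weight per vertex, each of them monotone when the labels in `A` increase and the
others decrease. Let `L` be a maximal set of vertices of degree one such that the neighbour of a
vertex of `L` is not in `L`, and attach every vertex of `L` to its neighbour. Harris' inequality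
bounds `T̃(x, 0)` below by the product over the vertices outside `L` of the expectations of these
joint weights.

This bound alone is too weak, so the labels of the vertices outside `A ∪ L` are first restricted
to `(0, s]`, at the cost of a factor `s` for each of them. The bounds for `T̃(x, 0)` and
`T̃(0, x)`, in which the two classes change roles, are then multiplied vertex by vertex: a vertex
with `k` neighbours in `L` and `d` others contributes a number depending only on `x`, `s`, `k`
and `d`. Maximality of `L` gives `k ≥ 1` or `d ≥ 2`, and in both cases this number is at least `1`
for `x = 471 / 200 = 2.355` and `s = 7 / 8`. Larger `x` follow by monotonicity in `x`.
-/

section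
open MeasureTheory ProbabilityTheory Set Function
open scoped ENNReal

theorem mul_add_mul_le_mul_add_mul_of_le {R : Type*} [CommSemiring R] [PartialOrder R]
    [CanonicallyOrderedAdd R] {a b c d : R} (hab : a ≤ b) (hcd : c ≤ d) :
    a * d + b * c ≤ a * c + b * d := by
  obtain ⟨p, rfl⟩ := le_iff_exists_add.1 hab
  obtain ⟨q, rfl⟩ := le_iff_exists_add.1 hcd
  exact le_iff_exists_add.2 ⟨p * q, by ring⟩

theorem lintegral_mul_lintegral_le_of_monovary {α : Type*} [MeasurableSpace α] (μ : Measure α)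
    [IsProbabilityMeasure μ] {f g : α → ℝ≥0∞} (hf : Measurable f) (hg : Measurable g)
    (hfg : Monovary f g) :
    (∫⁻ a, f a ∂μ) * ∫⁻ a, g a ∂μ ≤ ∫⁻ a, f a * g a ∂μ := by
  have rearrangement (a b : α) : f a * g b + g a * f b ≤ f a * g a + f b * g b := by
    rw [mul_comm (g a)]
    rcases lt_trichotomy (g a) (g b) with h | h | h
    · exact mul_add_mul_le_mul_add_mul_of_le (hfg h) h.le
    · rw [h]
    · rw [add_comm (f a * g b), add_comm (f a * g a)]
      exact mul_add_mul_le_mul_add_mul_of_le (hfg h) h.le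
  have double : 2 * ((∫⁻ a, f a ∂μ) * ∫⁻ a, g a ∂μ) ≤ 2 * ∫⁻ a, f a * g a ∂μ :=
    calc 2 * ((∫⁻ a, f a ∂μ) * ∫⁻ a, g a ∂μ)
        = ∫⁻ a, ∫⁻ b, f a * g b + g a * f b ∂μ ∂μ := by
          simp_rw [lintegral_add_left (hg.const_mul _), lintegral_const_mul _ hg,
            lintegral_const_mul _ hf]
          rw [lintegral_add_left (hf.mul_const _), lintegral_mul_const _ hf,
            lintegral_mul_const _ hg]
          ring
      _ ≤ ∫⁻ a, ∫⁻ b, f a * g a + f b * g b ∂μ ∂μ :=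
          lintegral_mono fun a ↦ lintegral_mono fun b ↦ rearrangement a b
      _ = 2 * ∫⁻ a, f a * g a ∂μ := by
          simp_rw [lintegral_add_left measurable_const, lintegral_const, measure_univ, mul_one]
          rw [lintegral_add_left (by fun_prop), lintegral_const, measure_univ]
          ring
  exact (ENNReal.mul_le_mul_iff_right two_ne_zero ENNReal.ofNat_ne_top).1 double

section ProductMeasure

variable {ι : Type*} {X : ι → Type*} [∀ i, MeasurableSpace (X i)]

theorem lintegral_pi_eq_lintegral_lintegral_update [Fintype ι] [DecidableEq ι]
    (μ : ∀ i, Measure (X i)) [∀ i, IsProbabilityMeasure (μ i)] {F : (∀ i, X i) → ℝ≥0∞}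
    (hF : Measurable F) (i : ι) :
    ∫⁻ x, F x ∂Measure.pi μ = ∫⁻ x, ∫⁻ t, F (update x i t) ∂μ i ∂Measure.pi μ := by
  have hF' : Measurable fun x ↦ ∫⁻ t, F (update x i t) ∂μ i := by
    simpa only [lmarginal_singleton] using hF.lmarginal μ (s := {i})
  refine lintegral_eq_of_lmarginal_eq {i} hF hF' ?_
  simp [lmarginal_singleton]

theorem prod_mul_lintegral_pi_le [Fintype ι] (μ ν : ∀ i, Measure (X i))
    [∀ i, SigmaFinite (μ i)] [∀ i, SigmaFinite (ν i)] (c : ι → ℝ≥0∞)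
    (hc : ∀ i, c i • ν i ≤ μ i) {F : (∀ i, X i) → ℝ≥0∞} (hF : Measurable F) :
    (∏ i, c i) * ∫⁻ x, F x ∂Measure.pi ν ≤ ∫⁻ x, F x ∂Measure.pi μ := by
  have lmarginal_le (s : Finset ι) (x : ∀ i, X i) :
      (∏ i ∈ s, c i) * (∫⋯∫⁻_s, F ∂ν) x ≤ (∫⋯∫⁻_s, F ∂μ) x := by
    induction s using Finset.induction generalizing x with
    | empty => simp
    | insert i s hi ih =>
      rw [Finset.prod_insert hi, lmarginal_insert _ hF hi, lmarginal_insert _ hF hi, mul_assoc]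
      have hmeas : Measurable fun t ↦ (∫⋯∫⁻_s, F ∂ν) (update x i t) :=
        (hF.lmarginal ν).comp (measurable_update x)
      calc c i * ((∏ j ∈ s, c j) * ∫⁻ t, (∫⋯∫⁻_s, F ∂ν) (update x i t) ∂ν i)
          = c i * ∫⁻ t, (∏ j ∈ s, c j) * (∫⋯∫⁻_s, F ∂ν) (update x i t) ∂ν i := by
            rw [lintegral_const_mul _ hmeas]
        _ ≤ c i * ∫⁻ t, (∫⋯∫⁻_s, F ∂μ) (update x i t) ∂ν i := by
            gcongr with t
            exact ih _
        _ = ∫⁻ t, (∫⋯∫⁻_s, F ∂μ) (update x i t) ∂(c i • ν i) := by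
            rw [lintegral_smul_measure, smul_eq_mul]
        _ ≤ ∫⁻ t, (∫⋯∫⁻_s, F ∂μ) (update x i t) ∂μ i := lintegral_mono' (hc i) le_rfl
  rcases isEmpty_or_nonempty (∀ i, X i) with _ | ⟨⟨x⟩⟩
  · simp [lintegral_of_isEmpty]
  · simpa only [lmarginal_univ] using lmarginal_le Finset.univ x

theorem lintegral_pi_prod_apply [Fintype ι] (μ : ∀ i, Measure (X i))
    [∀ i, IsProbabilityMeasure (μ i)] (T : Finset ι) {h : ∀ i, X i → ℝ≥0∞}
    (hh : ∀ i, Measurable (h i)) :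
    ∫⁻ x, ∏ i ∈ T, h i (x i) ∂Measure.pi μ = ∏ i ∈ T, ∫⁻ t, h i t ∂μ i := by
  have indep : iIndepFun (fun i (x : ∀ i, X i) ↦ h i (x i)) (Measure.pi μ) :=
    iIndepFun_pi fun i ↦ (hh i).aemeasurable
  rw [lintegral_prod_eq_prod_lintegral_of_indepFun T _ indep fun i ↦ by fun_prop]
  exact Finset.prod_congr rfl fun i _ ↦ (measurePreserving_eval μ i).lintegral_comp (hh i)

theorem lintegral_pi_prod_apply_apply [Fintype ι] (μ : ∀ i, Measure (X i))
    [∀ i, IsProbabilityMeasure (μ i)] {i : ι} {T : Finset ι} (hi : i ∉ T)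
    {c : ∀ j, X i → X j → ℝ≥0∞} (hc : ∀ j, Measurable (uncurry (c j))) :
    ∫⁻ x, ∏ j ∈ T, c j (x i) (x j) ∂Measure.pi μ =
      ∫⁻ t, ∏ j ∈ T, ∫⁻ u, c j t u ∂μ j ∂μ i := by
  have hcomp {β : Type _} [MeasurableSpace β] {f : β → X i} {j : ι} {g : β → X j}
      (hf : Measurable f) (hg : Measurable g) : Measurable fun b ↦ c j (f b) (g b) :=
    (hc j).comp (hf.prodMk hg)
  have hupdate (x : ∀ i, X i) (t : X i) :
      ∏ j ∈ T, c j (update x i t i) (update x i t j) = ∏ j ∈ T, c j t (x j) :=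
    Finset.prod_congr rfl fun j hj ↦ by
      rw [update_self, update_of_ne (ne_of_mem_of_not_mem hj hi)]
  rw [lintegral_pi_eq_lintegral_lintegral_update μ
    (Finset.measurable_prod _ fun j _ ↦ hcomp (by fun_prop) (by fun_prop)) i]
  simp_rw [hupdate]
  rw [lintegral_lintegral_swap
    (Finset.measurable_prod _ fun j _ ↦ hcomp (by fun_prop) (by fun_prop)).aemeasurable]
  exact lintegral_congr fun t ↦
    lintegral_pi_prod_apply μ T fun j ↦ (hc j).of_uncurry_left

end ProductMeasure

section Harris

variable {ι : Type*} {X : ι → Type*}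

/-- `g` is nondecreasing in the coordinates in `A` and nonincreasing in all the others. -/
def MonotoneAlong [∀ i, LE (X i)] {β : Type*} [LE β] (A : Set ι) (g : (∀ i, X i) → β) : Prop :=
  ∀ ⦃x y : ∀ i, X i⦄, (∀ i ∈ A, x i ≤ y i) → (∀ i ∉ A, y i ≤ x i) → g x ≤ g y

theorem MonotoneAlong.lmarginal [∀ i, Preorder (X i)] [∀ i, MeasurableSpace (X i)] {A : Set ι}
    {g : (∀ i, X i) → ℝ≥0∞} (hg : MonotoneAlong A g) (μ : ∀ i, Measure (X i)) (s : Finset ι) :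
    MonotoneAlong A (∫⋯∫⁻_s, g ∂μ) := by
  intro x y hA hAc
  refine lintegral_mono fun z ↦ hg (fun i hi ↦ ?_) fun i hi ↦ ?_
  all_goals
    by_cases his : i ∈ s
    · simp [updateFinset, his]
    · simp [updateFinset, his, hA, hAc, hi]

theorem MonotoneAlong.prod [∀ i, LE (X i)] {κ : Type*} {A : Set ι} {s : Finset κ}
    {g : κ → (∀ i, X i) → ℝ≥0∞} (hg : ∀ k ∈ s, MonotoneAlong A (g k)) :
    MonotoneAlong A fun x ↦ ∏ k ∈ s, g k x :=
  fun _ _ hA hAc ↦ Finset.prod_le_prod' fun k hk ↦ hg k hk hA hAc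

theorem MonotoneAlong.monovary_update [∀ i, LinearOrder (X i)] {A : Set ι}
    {g h : (∀ i, X i) → ℝ≥0∞} (hg : MonotoneAlong A g) (hh : MonotoneAlong A h)
    (x : ∀ i, X i) (i : ι) :
    Monovary (fun t ↦ g (update x i t)) fun t ↦ h (update x i t) := by
  have hupdate {f : (∀ i, X i) → ℝ≥0∞} (hf : MonotoneAlong A f) :
      if i ∈ A then Monotone fun t ↦ f (update x i t) else Antitone fun t ↦ f (update x i t) := by
    split_ifs with hi <;> intro t u htu <;> refine hf (fun j hj ↦ ?_) fun j hj ↦ ?_ <;>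
      rcases eq_or_ne j i with rfl | hji <;> simp_all
  have hg' := hupdate hg
  have hh' := hupdate hh
  split_ifs at hg' hh' with hi
  · exact hg'.monovary hh'
  · exact hg'.monovary hh'

variable [Fintype ι] [∀ i, LinearOrder (X i)] [∀ i, MeasurableSpace (X i)]
  (μ : ∀ i, Measure (X i)) [∀ i, IsProbabilityMeasure (μ i)] {A : Set ι}

theorem MonotoneAlong.lintegral_mul_lintegral_le {g h : (∀ i, X i) → ℝ≥0∞}
    (hg : MonotoneAlong A g) (hh : MonotoneAlong A h) (hgm : Measurable g) (hhm : Measurable h) :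
    (∫⁻ x, g x ∂Measure.pi μ) * ∫⁻ x, h x ∂Measure.pi μ ≤ ∫⁻ x, g x * h x ∂Measure.pi μ := by
  have lmarginal_mul_le (s : Finset ι) (x : ∀ i, X i) :
      (∫⋯∫⁻_s, g ∂μ) x * (∫⋯∫⁻_s, h ∂μ) x ≤ (∫⋯∫⁻_s, g * h ∂μ) x := by
    induction s using Finset.induction generalizing x with
    | empty => simp
    | insert i s hi ih =>
      rw [lmarginal_insert _ hgm hi, lmarginal_insert _ hhm hi,
        lmarginal_insert _ (hgm.mul hhm) hi]
      calc _ ≤ ∫⁻ t, (∫⋯∫⁻_s, g ∂μ) (update x i t) * (∫⋯∫⁻_s, h ∂μ) (update x i t) ∂μ i :=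
            lintegral_mul_lintegral_le_of_monovary (μ i)
              ((hgm.lmarginal μ).comp (measurable_update x))
              ((hhm.lmarginal μ).comp (measurable_update x))
              ((hg.lmarginal μ s).monovary_update (hh.lmarginal μ s) x i)
        _ ≤ _ := lintegral_mono fun t ↦ ih _
  rcases isEmpty_or_nonempty (∀ i, X i) with _ | ⟨⟨x⟩⟩
  · simp [lintegral_of_isEmpty]
  · simpa only [lmarginal_univ, Pi.mul_apply] using lmarginal_mul_le Finset.univ x

theorem MonotoneAlong.prod_lintegral_le {κ : Type*} (s : Finset κ)
    {g : κ → (∀ i, X i) → ℝ≥0∞} (hg : ∀ k ∈ s, MonotoneAlong A (g k))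
    (hgm : ∀ k, Measurable (g k)) :
    ∏ k ∈ s, ∫⁻ x, g k x ∂Measure.pi μ ≤ ∫⁻ x, ∏ k ∈ s, g k x ∂Measure.pi μ := by
  induction s using Finset.induction with
  | empty => simp
  | insert k s hk ih =>
    simp_rw [Finset.prod_insert hk]
    have hs : ∀ l ∈ s, MonotoneAlong A (g l) := fun l hl ↦ hg l (Finset.mem_insert_of_mem hl)
    calc _ ≤ (∫⁻ x, g k x ∂Measure.pi μ) * ∫⁻ x, ∏ l ∈ s, g l x ∂Measure.pi μ := by
          gcongr
          exact ih hs
      _ ≤ _ := (hg k (Finset.mem_insert_self k s)).lintegral_mul_lintegral_le μ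
          (MonotoneAlong.prod hs) (hgm k) (Finset.measurable_prod _ fun l _ ↦ hgm l)

end Harris

section OrderLaw

variable {V α : Type*} [Fintype V]

theorem lintegral_pi_comp_perm [MeasurableSpace α] (μ : Measure α) [SigmaFinite μ]
    {F : (V → α) → ℝ≥0∞} (hF : Measurable F) (σ : Equiv.Perm V) :
    ∫⁻ f, F (f ∘ σ) ∂Measure.pi (fun _ ↦ μ) = ∫⁻ f, F f ∂Measure.pi fun _ ↦ μ := by
  rw [← (measurePreserving_piCongrLeft (fun _ ↦ μ) σ.symm).lintegral_comp hF]
  congr! with f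
  ext v
  simpa using (MeasurableEquiv.piCongrLeft_apply_apply σ.symm (β := fun _ ↦ α) f (σ v)).symm

theorem ae_injective_pi [MeasurableSpace α] [MeasurableEq α] (μ : Measure α)
    [IsProbabilityMeasure μ] [NullSingletonClass μ] :
    ∀ᵐ f ∂Measure.pi fun _ : V ↦ μ, Injective f := by
  have ae_ne (i j : V) (hij : i ≠ j) : ∀ᵐ f ∂Measure.pi fun _ : V ↦ μ, f i ≠ f j := by
    have hmeas : MeasurableSet {f : V → α | f i = f j} :=
      measurableSet_eq_fun (measurable_pi_apply i) (measurable_pi_apply j)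
    rw [ae_iff]
    simp only [ne_eq, not_not]
    rw [← lintegral_indicator_one hmeas, lintegral_pi_eq_lintegral_lintegral_update _
      (measurable_one.indicator hmeas) i]
    have hupdate (f : V → α) :
        (fun t ↦ {f : V → α | f i = f j}.indicator (1 : (V → α) → ℝ≥0∞) (update f i t)) =
          ({f j} : Set α).indicator 1 := by
      ext t
      simp [indicator, update_of_ne hij.symm]
    simp_rw [hupdate, lintegral_indicator_one (measurableSet_singleton _), measure_singleton,
      lintegral_zero]
  have ae_pairwise : ∀ᵐ f ∂Measure.pi fun _ : V ↦ μ, ∀ i j, i ≠ j → f i ≠ f j := by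
    simpa only [ae_all_iff, Filter.eventually_imp_distrib_left] using ae_ne
  filter_upwards [ae_pairwise] with f hf i j hij
  exact not_imp_not.1 (hf i j) hij

variable [LinearOrder α]

theorem exists_strictMono_comp_equiv {f : V → α} (hf : Injective f) :
    ∃ (e : Fin (Fintype.card V) → α) (π : V ≃ Fin (Fintype.card V)), StrictMono e ∧ e ∘ π = f := by
  let ε := Fintype.equivFin V
  let σ := Tuple.sort (f ∘ ε.symm)
  refine ⟨(f ∘ ε.symm) ∘ σ, ε.trans σ.symm, ?_, ?_⟩
  · exact (Tuple.monotone_sort (f ∘ ε.symm)).strictMono_of_injective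
      ((hf.comp ε.symm.injective).comp σ.injective)
  · ext v
    simp

variable [DecidableEq V]

theorem sum_perm_comp_eq_sum_equiv {M : Type*} [AddCommMonoid M] {Φ : (V → α) → M}
    {Ψ : (V ≃ Fin (Fintype.card V)) → M}
    (hΦΨ : ∀ (e : Fin (Fintype.card V) → α) (π : V ≃ Fin (Fintype.card V)),
      StrictMono e → Φ (e ∘ π) = Ψ π)
    {f : V → α} (hf : Injective f) :
    ∑ σ : Equiv.Perm V, Φ (f ∘ σ) = ∑ π, Ψ π := by
  obtain ⟨e, π₀, he, rfl⟩ := exists_strictMono_comp_equiv hf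
  exact Fintype.sum_equiv ((Equiv.refl V).equivCongr π₀) _ _ fun σ ↦ hΦΨ e (σ.trans π₀) he

theorem factorial_mul_lintegral_pi_eq_sum_equiv [MeasurableSpace α] [MeasurableEq α]
    (μ : Measure α) [IsProbabilityMeasure μ] [NullSingletonClass μ]
    {Φ : (V → α) → ℝ≥0∞} (hΦ : Measurable Φ) {Ψ : (V ≃ Fin (Fintype.card V)) → ℝ≥0∞}
    (hΦΨ : ∀ (e : Fin (Fintype.card V) → α) (π : V ≃ Fin (Fintype.card V)),
      StrictMono e → Φ (e ∘ π) = Ψ π) :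
    ((Fintype.card V).factorial : ℝ≥0∞) * ∫⁻ f, Φ f ∂Measure.pi (fun _ ↦ μ) = ∑ π, Ψ π := by
  have hcomp (σ : Equiv.Perm V) : Measurable fun f : V → α ↦ Φ (f ∘ σ) :=
    hΦ.comp (measurable_pi_lambda _ fun v ↦ measurable_pi_apply (σ v))
  calc ((Fintype.card V).factorial : ℝ≥0∞) * ∫⁻ f, Φ f ∂Measure.pi (fun _ ↦ μ)
      = ∑ σ : Equiv.Perm V, ∫⁻ f, Φ (f ∘ σ) ∂Measure.pi (fun _ ↦ μ) := by
        simp [lintegral_pi_comp_perm μ hΦ, Fintype.card_perm]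
    _ = ∫⁻ f, ∑ σ : Equiv.Perm V, Φ (f ∘ σ) ∂Measure.pi (fun _ ↦ μ) :=
        (lintegral_finsetSum _ fun σ _ ↦ hcomp σ).symm
    _ = ∫⁻ _, ∑ π, Ψ π ∂Measure.pi (fun _ : V ↦ μ) := by
        refine lintegral_congr_ae ?_
        filter_upwards [ae_injective_pi μ] with f hf
        exact sum_perm_comp_eq_sum_equiv hΦΨ hf
    _ = ∑ π, Ψ π := by simp

end OrderLaw

section ActivityWeight

variable {V β : Type*}

/-- The vertex `v` is active for the labelling `f`: its label exceeds all the labels of its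
neighbours. -/
def IsActive [LT β] (G : SimpleGraph V) (f : V → β) (v : V) : Prop :=
  ∀ j, G.Adj v j → f j < f v

/-- The factor contributed by the vertex `v` to `x ^ ia(f) * 0 ^ ea(f)`, where `A` is the class
whose active vertices are internally active. Extended nonnegative values let the labels be
integrated without side conditions. -/
noncomputable def activityWeight [LT β] (G : SimpleGraph V) (A : Set V) (x : ℝ≥0∞) (f : V → β)
    (v : V) : ℝ≥0∞ :=
  if IsActive G f v then if v ∈ A then x else 0 else 1

theorem IsActive.of_le [Preorder β] {G : SimpleGraph V} {f g : V → β} {v : V}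
    (hf : IsActive G f v) (hv : f v ≤ g v) (hadj : ∀ j, G.Adj v j → g j ≤ f j) :
    IsActive G g v :=
  fun j hj ↦ ((hadj j hj).trans_lt (hf j hj)).trans_le hv

theorem isActive_strictMono_comp {γ : Type*} [LinearOrder β] [Preorder γ] {G : SimpleGraph V}
    {e : β → γ} (he : StrictMono e) (f : V → β) (v : V) :
    IsActive G (e ∘ f) v ↔ IsActive G f v := by
  simp only [IsActive, comp_apply, he.lt_iff_lt]

theorem monotoneAlong_activityWeight [Preorder β] {G : SimpleGraph V} {A : Set V}
    (hG : IsBipartition G A) {x : ℝ≥0∞} (hx : 1 ≤ x) (v : V) :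
    MonotoneAlong A fun f : V → β ↦ activityWeight G A x f v := by
  intro f g hA hAc
  by_cases hv : v ∈ A
  · have isActive_of_isActive (hf : IsActive G f v) : IsActive G g v :=
      hf.of_le (hA v hv) fun j hj ↦ hAc j ((hG v j hj).1 hv)
    simp only [activityWeight, hv, if_true]
    split_ifs <;> simp_all
  · have isActive_of_isActive (hg : IsActive G g v) : IsActive G f v :=
      hg.of_le (hAc v hv) fun j hj ↦ hA j (not_not.1 fun hj' ↦ hv ((hG v j hj).2 hj'))
    simp only [activityWeight, hv, if_false]
    split_ifs <;> simp_all

theorem measurable_activityWeight [Finite V] (G : SimpleGraph V) (A : Set V) (x : ℝ≥0∞) (v : V) :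
    Measurable fun f : V → ℝ ↦ activityWeight G A x f v := by
  refine Measurable.ite ?_ measurable_const measurable_const
  simp only [IsActive, ofPred_forall]
  exact MeasurableSet.iInter fun j ↦ MeasurableSet.iInter fun _ ↦
    measurableSet_lt (measurable_pi_apply j) (measurable_pi_apply v)

variable [Fintype V]

theorem prod_activityWeight [LT β] (G : SimpleGraph V) (A : Set V) (x : ℝ≥0∞) (f : V → β) :
    ∏ v, activityWeight G A x f v =
      x ^ Nat.card {i : V // i ∈ A ∧ IsActive G f i} *
        0 ^ Nat.card {j : V // j ∉ A ∧ IsActive G f j} := by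
  have pow_card (P : V → Prop) (y : ℝ≥0∞) :
      y ^ Nat.card {v // P v} = ∏ v, if P v then y else 1 := by
    simp [Finset.prod_ite, Fintype.card_subtype]
  rw [pow_card, pow_card, ← Finset.prod_mul_distrib]
  refine Finset.prod_congr rfl fun v _ ↦ ?_
  by_cases hv : v ∈ A <;> simp [activityWeight, hv]

end ActivityWeight

section PermTutte

variable {V : Type*} [Fintype V] [DecidableEq V] (G : SimpleGraph V) (A : Set V)

theorem permTutte_zero_left (x : ℝ) : permTutte G A 0 x = permTutte G Aᶜ x 0 := by
  unfold permTutte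
  congr! 2 with π
  rw [mul_comm]
  simp

theorem permTutte_nonneg {x y : ℝ} (hx : 0 ≤ x) (hy : 0 ≤ y) : 0 ≤ permTutte G A x y :=
  mul_nonneg (by positivity) (Finset.sum_nonneg fun _ _ ↦ by positivity)

theorem permTutte_le_permTutte {x x' y : ℝ} (hx : 0 ≤ x) (hy : 0 ≤ y) (hxx' : x ≤ x') :
    permTutte G A x y ≤ permTutte G A x' y := by
  unfold permTutte
  gcongr

theorem ofReal_permTutte_zero_right {x : ℝ} (hx : 0 ≤ x) (μ : Measure ℝ) [IsProbabilityMeasure μ]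
    [NullSingletonClass μ] :
    ENNReal.ofReal (permTutte G A x 0) =
      ∫⁻ f, ∏ v, activityWeight G A (ENNReal.ofReal x) f v ∂Measure.pi fun _ ↦ μ := by
  have invariant (e : Fin (Fintype.card V) → ℝ) (π : V ≃ Fin (Fintype.card V))
      (he : StrictMono e) : ∏ v, activityWeight G A (ENNReal.ofReal x) (e ∘ π) v =
        ∏ v, activityWeight G A (ENNReal.ofReal x) π v := by
    simp only [activityWeight, isActive_strictMono_comp he]
  have law := factorial_mul_lintegral_pi_eq_sum_equiv μ
    (Finset.measurable_prod _ fun v _ ↦ measurable_activityWeight G A (ENNReal.ofReal x) v)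
    invariant
  have factorial_ne_zero : ((Fintype.card V).factorial : ℝ≥0∞) ≠ 0 := by
    exact_mod_cast Nat.factorial_ne_zero _
  rw [← one_mul (lintegral _ _), ← ENNReal.inv_mul_cancel factorial_ne_zero (by simp), mul_assoc,
    law, permTutte, ENNReal.ofReal_mul (by positivity), ENNReal.ofReal_inv_of_pos (by positivity),
    ENNReal.ofReal_natCast, ENNReal.ofReal_sum_of_nonneg fun _ _ ↦ by positivity]
  congr! 2 with π
  rw [prod_activityWeight, ENNReal.ofReal_mul (by positivity), ENNReal.ofReal_pow hx,
    ENNReal.ofReal_pow le_rfl, ENNReal.ofReal_zero]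
  rfl

end PermTutte

section PendantSet

variable {V : Type*} (G : SimpleGraph V)

/-- Every vertex of `L` has exactly one neighbour, and that neighbour is not in `L`. -/
def IsPendantSet (L : Set V) : Prop :=
  ∀ v ∈ L, ∃ i ∉ L, ∀ w, G.Adj v w ↔ w = i

variable [Fintype V]

/-- The neighbours of `i` in the pendant set `L`. -/
noncomputable def pendantNeighbors (L : Set V) (i : V) : Finset V :=
  {v | G.Adj i v ∧ v ∈ L}

/-- The neighbours of `i` outside the pendant set `L`. -/
noncomputable def coreNeighbors (L : Set V) (i : V) : Finset V :=
  {v | G.Adj i v ∧ v ∉ L}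

variable {G} {L : Set V}

theorem mem_pendantNeighbors {i v : V} : v ∈ pendantNeighbors G L i ↔ G.Adj i v ∧ v ∈ L := by
  simp [pendantNeighbors]

theorem mem_coreNeighbors {i v : V} : v ∈ coreNeighbors G L i ↔ G.Adj i v ∧ v ∉ L := by
  simp [coreNeighbors]

theorem mem_pendantNeighbors_union_coreNeighbors {i v : V} :
    v ∈ pendantNeighbors G L i ∪ coreNeighbors G L i ↔ G.Adj i v := by
  rw [Finset.mem_union, mem_pendantNeighbors, mem_coreNeighbors, ← and_or_left]
  exact and_iff_left (em _)

theorem disjoint_pendantNeighbors_coreNeighbors (i : V) :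
    Disjoint (pendantNeighbors G L i) (coreNeighbors G L i) :=
  Finset.disjoint_left.2 fun _ hv hv' ↦ (mem_coreNeighbors.1 hv').2 (mem_pendantNeighbors.1 hv).2

theorem IsPendantSet.adj_iff_eq_of_mem_pendantNeighbors (hL : IsPendantSet G L) {i v : V}
    (hv : v ∈ pendantNeighbors G L i) (w : V) : G.Adj v w ↔ w = i := by
  obtain ⟨hadj, hvL⟩ := mem_pendantNeighbors.1 hv
  obtain ⟨c, -, hc⟩ := hL v hvL
  rw [(hc i).1 hadj.symm]
  exact hc w

theorem IsPendantSet.insert (hL : IsPendantSet G L) {i : V} (hiL : i ∉ L)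
    (hpendant : pendantNeighbors G L i = ∅) (hcore : (coreNeighbors G L i).card = 1) :
    IsPendantSet G (insert i L) := by
  obtain ⟨c, hc⟩ := Finset.card_eq_one.1 hcore
  have adj_iff (w : V) : G.Adj i w ↔ w = c := by
    rw [← mem_pendantNeighbors_union_coreNeighbors (L := L), hpendant, hc]
    simp
  have hcL : c ∉ L := (mem_coreNeighbors.1 (hc ▸ Finset.mem_singleton_self c)).2
  rintro v (rfl | hv)
  · refine ⟨c, ?_, adj_iff⟩
    rintro (rfl | h)
    · exact G.irrefl ((adj_iff c).2 rfl)
    · exact hcL h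
  · obtain ⟨j, hjL, hj⟩ := hL v hv
    refine ⟨j, ?_, hj⟩
    rintro (rfl | h)
    · exact Finset.notMem_empty v
        (hpendant ▸ mem_pendantNeighbors.2 ⟨((hj j).2 rfl).symm, hv⟩)
    · exact hjL h

theorem exists_isPendantSet (hG : ∀ v, ∃ w, G.Adj v w) :
    ∃ L, IsPendantSet G L ∧ ∀ i ∉ L,
      1 ≤ (pendantNeighbors G L i).card ∨ 2 ≤ (coreNeighbors G L i).card := by
  obtain ⟨L, -, hL⟩ := Finite.exists_le_maximal (α := Set V) (p := IsPendantSet G) (a := ∅) (by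
    simp [IsPendantSet])
  refine ⟨L, hL.prop, fun i hiL ↦ ?_⟩
  by_contra! h
  obtain ⟨hpendant, hcore⟩ := h
  have hpendant : pendantNeighbors G L i = ∅ := by simpa using hpendant
  have hcore_pos : 0 < (coreNeighbors G L i).card := by
    obtain ⟨w, hw⟩ := hG i
    rw [← mem_pendantNeighbors_union_coreNeighbors (L := L), hpendant, Finset.empty_union] at hw
    exact Finset.card_pos.2 ⟨w, hw⟩
  have insert_le := hL.le_of_ge (hL.prop.insert hiL hpendant (by omega)) (subset_insert i L)
  exact hiL (insert_le (mem_insert i L))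

theorem IsPendantSet.prod_eq_prod_mul_prod (hL : IsPendantSet G L) {M : Type*} [CommMonoid M]
    (w : V → M) :
    ∏ v, w v = ∏ i with i ∉ L, w i * ∏ v ∈ pendantNeighbors G L i, w v := by
  have regroup : ∏ i with i ∉ L, ∏ v ∈ pendantNeighbors G L i, w v =
      ∏ v with v ∈ L, ∏ i with G.Adj v i, w v :=
    Finset.prod_comm' fun i v ↦ by
      simp only [Finset.mem_filter_univ, mem_pendantNeighbors]
      refine ⟨fun ⟨_, hadj, hv⟩ ↦ ⟨hadj.symm, hv⟩, fun ⟨hadj, hv⟩ ↦ ⟨?_, hadj.symm, hv⟩⟩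
      obtain ⟨c, hcL, hc⟩ := hL v hv
      rwa [(hc i).1 hadj]
  have unique_neighbor : ∏ v with v ∈ L, ∏ i with G.Adj v i, w v = ∏ v with v ∈ L, w v :=
    Finset.prod_congr rfl fun v hv ↦ by
      obtain ⟨c, -, hc⟩ := hL v (Finset.mem_filter_univ v |>.1 hv)
      have neighbors_eq : ({i | G.Adj v i} : Finset V) = {c} := by
        ext i
        simp [hc]
      rw [neighbors_eq, Finset.prod_singleton]
  rw [Finset.prod_mul_distrib, regroup, unique_neighbor, mul_comm,
    Finset.prod_filter_mul_prod_filter_not]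

end PendantSet

section LocalWeight

variable {V β : Type*} [Fintype V] [LinearOrder β]

/-- The joint factor of a vertex `i` outside the pendant set `L` and of its neighbours in `L`. -/
noncomputable def localWeight (G : SimpleGraph V) (A L : Set V) (x : ℝ≥0∞) (f : V → β) (i : V) :
    ℝ≥0∞ :=
  activityWeight G A x f i * ∏ v ∈ pendantNeighbors G L i, activityWeight G A x f v

variable {G : SimpleGraph V} {A L : Set V} (x : ℝ≥0∞) (f : V → β) {i : V}

theorem prod_ite_lt_eq_ite_isActive :
    ∏ v ∈ pendantNeighbors G L i ∪ coreNeighbors G L i, (if f v < f i then (1 : ℝ≥0∞) else 0) =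
      if IsActive G f i then 1 else 0 := by
  simp only [Finset.prod_ite_zero, Finset.prod_const_one, mem_pendantNeighbors_union_coreNeighbors,
    IsActive]
  congr

theorem IsPendantSet.prod_activityWeight_pendantNeighbors (hL : IsPendantSet G L) :
    ∏ v ∈ pendantNeighbors G L i, activityWeight G A x f v =
      ∏ v ∈ pendantNeighbors G L i, if f i < f v then if v ∈ A then x else 0 else 1 :=
  Finset.prod_congr rfl fun v hv ↦ by
    simp [activityWeight, IsActive, hL.adj_iff_eq_of_mem_pendantNeighbors hv]

theorem IsActive.prod_pendantNeighbors_ite_eq_one (h : IsActive G f i) (y : V → ℝ≥0∞) :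
    ∏ v ∈ pendantNeighbors G L i, (if f i < f v then y v else 1) = 1 :=
  Finset.prod_eq_one fun v hv ↦ if_neg (h v (mem_pendantNeighbors.1 hv).1).not_gt

theorem localWeight_of_mem (hG : IsBipartition G A) (hL : IsPendantSet G L) (hi : i ∈ A) :
    localWeight G A L (1 + x) f i =
      ∏ v ∈ pendantNeighbors G L i, (if f i < f v then 0 else 1) +
        x * ∏ v ∈ pendantNeighbors G L i ∪ coreNeighbors G L i, if f v < f i then 1 else 0 := by
  have hA (v : V) (hv : v ∈ pendantNeighbors G L i) : v ∉ A :=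
    (hG i v (mem_pendantNeighbors.1 hv).1).1 hi
  have prod_eq : ∏ v ∈ pendantNeighbors G L i, activityWeight G A (1 + x) f v =
      ∏ v ∈ pendantNeighbors G L i, if f i < f v then 0 else 1 := by
    rw [hL.prod_activityWeight_pendantNeighbors]
    exact Finset.prod_congr rfl fun v hv ↦ by rw [if_neg (hA v hv)]
  rw [localWeight, prod_eq, prod_ite_lt_eq_ite_isActive, activityWeight, if_pos hi]
  by_cases h : IsActive G f i
  · simp [h, h.prod_pendantNeighbors_ite_eq_one]
  · simp [h]

theorem localWeight_add_of_notMem (hG : IsBipartition G A) (hL : IsPendantSet G L) (hi : i ∉ A) :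
    localWeight G A L x f i +
        ∏ v ∈ pendantNeighbors G L i ∪ coreNeighbors G L i, (if f v < f i then 1 else 0) =
      ∏ v ∈ pendantNeighbors G L i, if f i < f v then x else 1 := by
  have hA (v : V) (hv : v ∈ pendantNeighbors G L i) : v ∈ A :=
    not_not.1 fun h ↦ hi ((hG i v (mem_pendantNeighbors.1 hv).1).2 h)
  have prod_eq : ∏ v ∈ pendantNeighbors G L i, activityWeight G A x f v =
      ∏ v ∈ pendantNeighbors G L i, if f i < f v then x else 1 := by
    rw [hL.prod_activityWeight_pendantNeighbors]
    exact Finset.prod_congr rfl fun v hv ↦ by rw [if_pos (hA v hv)]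
  rw [localWeight, prod_eq, prod_ite_lt_eq_ite_isActive, activityWeight, if_neg hi]
  by_cases h : IsActive G f i
  · simp [h, h.prod_pendantNeighbors_ite_eq_one]
  · simp [h]

end LocalWeight

section UniformLaw

/-- The uniform distribution on the interval `(0, s]`. -/
noncomputable def uniformLaw (s : ℝ) : Measure ℝ :=
  volume[|Ioc 0 s]

theorem isProbabilityMeasure_uniformLaw {s : ℝ} (hs : 0 < s) :
    IsProbabilityMeasure (uniformLaw s) :=
  cond_isProbabilityMeasure_of_finite (by simp [hs]) (by simp)

instance (s : ℝ) : NullSingletonClass (uniformLaw s) :=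
  ⟨fun t ↦ cond_absolutelyContinuous (measure_singleton t)⟩

theorem ofReal_smul_uniformLaw {s : ℝ} (hs : 0 < s) :
    ENNReal.ofReal s • uniformLaw s = volume.restrict (Ioc 0 s) := by
  rw [uniformLaw, ProbabilityTheory.cond, smul_smul, Real.volume_Ioc, sub_zero,
    ENNReal.mul_inv_cancel (by simpa) (by simp), one_smul]

theorem uniformLaw_apply (s : ℝ) (S : Set ℝ) :
    uniformLaw s S = (ENNReal.ofReal s)⁻¹ * volume (Ioc 0 s ∩ S) := by
  rw [uniformLaw, cond_apply measurableSet_Ioc, Real.volume_Ioc, sub_zero]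

theorem uniformLaw_Iic {s t : ℝ} (hs : 0 < s) :
    uniformLaw s (Iic t) = ENNReal.ofReal (min 1 (t / s)) := by
  rw [uniformLaw_apply, Ioc_inter_Iic, Real.volume_Ioc, sub_zero, ← ENNReal.ofReal_inv_of_pos hs,
    ← ENNReal.ofReal_mul (by positivity), mul_comm, ← div_eq_mul_inv,
    ← min_div_div_right hs.le, div_self hs.ne']

theorem lintegral_uniformLaw_ite_lt {s t : ℝ} (hs : 0 < s) :
    ∫⁻ u, (if u < t then 1 else 0) ∂uniformLaw s = ENNReal.ofReal (min 1 (t / s)) := by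
  rw [← uniformLaw_Iic hs, ← measure_congr (Iio_ae_eq_Iic (μ := uniformLaw s)),
    ← lintegral_indicator_one measurableSet_Iio]
  simp [indicator]

theorem lintegral_uniformLaw_one_ite_lt {t y : ℝ} (ht : t ∈ Ioc 0 1) (hy : 0 ≤ y) :
    ∫⁻ u, (if t < u then ENNReal.ofReal y else 1) ∂uniformLaw 1 =
      ENNReal.ofReal (t + y * (1 - t)) := by
  have hIic : uniformLaw 1 (Iic t) = ENNReal.ofReal t := by
    rw [uniformLaw_Iic one_pos, div_one, min_eq_right ht.2]
  have hIoi : uniformLaw 1 (Ioi t) = ENNReal.ofReal (1 - t) := by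
    rw [uniformLaw_apply, Ioc_inter_Ioi, Real.volume_Ioc, max_eq_right ht.1.le]
    simp
  calc ∫⁻ u, (if t < u then ENNReal.ofReal y else 1) ∂uniformLaw 1
      = (∫⁻ _ in Iic t, 1 ∂uniformLaw 1) + ∫⁻ _ in Ioi t, ENNReal.ofReal y ∂uniformLaw 1 := by
        rw [← lintegral_add_compl _ (measurableSet_Iic (a := t)), compl_Iic]
        congr 1
        · exact setLIntegral_congr_fun measurableSet_Iic fun u hu ↦ if_neg (not_lt.2 hu)
        · exact setLIntegral_congr_fun measurableSet_Ioi fun u hu ↦ if_pos hu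
    _ = ENNReal.ofReal (t + y * (1 - t)) := by
        rw [setLIntegral_one, setLIntegral_const, hIic, hIoi, ← ENNReal.ofReal_mul hy,
          ENNReal.ofReal_add ht.1.le (mul_nonneg hy (sub_nonneg.2 ht.2))]

theorem ofReal_mul_lintegral_uniformLaw {s : ℝ} (hs : 0 < s) {F : ℝ → ℝ≥0∞} {φ : ℝ → ℝ}
    (hφ : Continuous φ) (hφ0 : ∀ t ∈ Ioc 0 s, 0 ≤ φ t)
    (hF : ∀ t ∈ Ioc 0 s, F t = ENNReal.ofReal (φ t)) :
    ENNReal.ofReal s * ∫⁻ t, F t ∂uniformLaw s = ENNReal.ofReal (∫ t in (0 : ℝ)..s, φ t) := by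
  calc ENNReal.ofReal s * ∫⁻ t, F t ∂uniformLaw s
      = ∫⁻ t in Ioc 0 s, F t := by
        rw [← ofReal_smul_uniformLaw hs, lintegral_smul_measure, smul_eq_mul]
    _ = ∫⁻ t in Ioc 0 s, ENNReal.ofReal (φ t) := setLIntegral_congr_fun measurableSet_Ioc hF
    _ = ENNReal.ofReal (∫ t in (0 : ℝ)..s, φ t) := by
        rw [intervalIntegral.integral_of_le hs.le, ofReal_integral_eq_lintegral_ofReal]
        · exact (hφ.intervalIntegrable 0 s).1
        · exact (ae_restrict_iff' measurableSet_Ioc).2 (ae_of_all _ hφ0)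

end UniformLaw

section UniformLabels

variable {V : Type*} [Fintype V] {σ : V → ℝ} (hσ : ∀ v, 0 < σ v) {T : Finset V} {i : V}
  (hi : i ∉ T)

include hσ hi

theorem ofReal_mul_lintegral_prod_ite_lt :
    ENNReal.ofReal (σ i) *
        ∫⁻ f, ∏ v ∈ T, (if f v < f i then 1 else 0) ∂Measure.pi (fun v ↦ uniformLaw (σ v)) =
      ENNReal.ofReal (∫ t in (0 : ℝ)..σ i, ∏ v ∈ T, min 1 (t / σ v)) := by
  have (v : V) := isProbabilityMeasure_uniformLaw (hσ v)
  rw [lintegral_pi_prod_apply_apply _ hi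
    (c := fun (_ : V) (t u : ℝ) ↦ if u < t then 1 else 0)
    fun _ ↦ Measurable.ite (measurableSet_lt measurable_snd measurable_fst) (by fun_prop)
      (by fun_prop)]
  have hmin (t : ℝ) (ht : t ∈ Ioc 0 (σ i)) (v : V) : 0 ≤ min 1 (t / σ v) :=
    le_min zero_le_one (div_pos ht.1 (hσ v)).le
  refine ofReal_mul_lintegral_uniformLaw (hσ i) (by fun_prop)
    (fun t ht ↦ Finset.prod_nonneg fun v _ ↦ hmin t ht v) fun t ht ↦ ?_
  rw [ENNReal.ofReal_prod_of_nonneg fun v _ ↦ hmin t ht v]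
  exact Finset.prod_congr rfl fun v _ ↦ lintegral_uniformLaw_ite_lt (hσ v)

theorem ofReal_mul_lintegral_prod_ite_gt (hσi : σ i ≤ 1) (hT : ∀ v ∈ T, σ v = 1) {y : ℝ}
    (hy : 0 ≤ y) :
    ENNReal.ofReal (σ i) * ∫⁻ f, ∏ v ∈ T, (if f i < f v then ENNReal.ofReal y else 1)
        ∂Measure.pi (fun v ↦ uniformLaw (σ v)) =
      ENNReal.ofReal (∫ t in (0 : ℝ)..σ i, (t + y * (1 - t)) ^ T.card) := by
  have (v : V) := isProbabilityMeasure_uniformLaw (hσ v)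
  rw [lintegral_pi_prod_apply_apply _ hi
    (c := fun (_ : V) (t u : ℝ) ↦ if t < u then ENNReal.ofReal y else 1)
    fun _ ↦ Measurable.ite (measurableSet_lt measurable_fst measurable_snd) (by fun_prop)
      (by fun_prop)]
  have hbase (t : ℝ) (ht : t ∈ Ioc 0 (σ i)) : 0 ≤ t + y * (1 - t) :=
    add_nonneg ht.1.le (mul_nonneg hy (sub_nonneg.2 (ht.2.trans hσi)))
  refine ofReal_mul_lintegral_uniformLaw (hσ i) (by fun_prop)
    (fun t ht ↦ pow_nonneg (hbase t ht) _) fun t ht ↦ ?_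
  rw [ENNReal.ofReal_pow (hbase t ht), ← Finset.prod_const]
  refine Finset.prod_congr rfl fun v hv ↦ ?_
  rw [hT v hv, lintegral_uniformLaw_one_ite_lt ⟨ht.1, ht.2.trans hσi⟩ hy]

end UniformLabels

section LowerBound

variable {V : Type*} {A L : Set V} {s : ℝ}

/-- The length of the label interval of `v` after the change of measure: labels of vertices
outside `A ∪ L` are restricted to `(0, s]`. -/
noncomputable def labelScale (A L : Set V) (s : ℝ) (v : V) : ℝ :=
  if v ∈ A ∪ L then 1 else s

/-- The mean of the local weight of a vertex of `A` with `k` pendant and `d` core neighbours. -/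
noncomputable def upperMean (x s : ℝ) (k d : ℕ) : ℝ :=
  (∫ t in (0 : ℝ)..1, t ^ k) + (x - 1) * ∫ t in (0 : ℝ)..1, t ^ k * min 1 (t / s) ^ d

/-- The mean of the local weight of a vertex outside `A` with `k` pendant and `d` core neighbours,
multiplied by `s`. -/
noncomputable def lowerMean (x s : ℝ) (k d : ℕ) : ℝ :=
  (∫ t in (0 : ℝ)..s, (t + x * (1 - t)) ^ k) - ∫ t in (0 : ℝ)..s, t ^ (k + d)

theorem labelScale_of_mem {v : V} (hv : v ∈ A ∪ L) : labelScale A L s v = 1 :=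
  if_pos hv

theorem labelScale_of_notMem {v : V} (hv : v ∉ A ∪ L) : labelScale A L s v = s :=
  if_neg hv

theorem labelScale_pos (hs : 0 < s) (v : V) : 0 < labelScale A L s v := by
  unfold labelScale
  split_ifs <;> positivity

theorem labelScale_le_one (hs : s ≤ 1) (v : V) : labelScale A L s v ≤ 1 := by
  unfold labelScale
  split_ifs
  exacts [le_rfl, hs]

theorem ofReal_smul_uniformLaw_le {r s : ℝ} (hr : 0 < r) (hrs : r ≤ s) :
    ENNReal.ofReal r • uniformLaw r ≤ ENNReal.ofReal s • uniformLaw s := by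
  rw [ofReal_smul_uniformLaw hr, ofReal_smul_uniformLaw (hr.trans_le hrs)]
  exact Measure.restrict_mono_set _ (Ioc_subset_Ioc_right hrs)

theorem measurable_prod_ite_lt (T : Finset V) (i : V) :
    Measurable fun f : V → ℝ ↦ ∏ v ∈ T, if f v < f i then (1 : ℝ≥0∞) else 0 :=
  Finset.measurable_prod _ fun v _ ↦ Measurable.ite
    (measurableSet_lt (measurable_pi_apply v) (measurable_pi_apply i)) measurable_const
    measurable_const

theorem measurable_prod_ite_gt (T : Finset V) (i : V) (y : ℝ≥0∞) :
    Measurable fun f : V → ℝ ↦ ∏ v ∈ T, if f i < f v then y else 1 :=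
  Finset.measurable_prod _ fun v _ ↦ Measurable.ite
    (measurableSet_lt (measurable_pi_apply i) (measurable_pi_apply v)) measurable_const
    measurable_const

variable [Fintype V] {G : SimpleGraph V} {i : V}

theorem measurable_localWeight (G : SimpleGraph V) (A L : Set V) (x : ℝ≥0∞) (i : V) :
    Measurable fun f : V → ℝ ↦ localWeight G A L x f i :=
  (measurable_activityWeight G A x i).mul
    (Finset.measurable_prod _ fun v _ ↦ measurable_activityWeight G A x v)

theorem monotoneAlong_localWeight (hG : IsBipartition G A) {x : ℝ≥0∞} (hx : 1 ≤ x) (i : V) :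
    MonotoneAlong A fun f : V → ℝ ↦ localWeight G A L x f i :=
  fun _ _ hA hAc ↦ mul_le_mul' (monotoneAlong_activityWeight hG hx i hA hAc)
    (MonotoneAlong.prod (fun v _ ↦ monotoneAlong_activityWeight hG hx v) hA hAc)

theorem labelScale_of_mem_pendantNeighbors {v : V} (hv : v ∈ pendantNeighbors G L i) :
    labelScale A L s v = 1 :=
  labelScale_of_mem (.inr (mem_pendantNeighbors.1 hv).2)

theorem notMem_pendantNeighbors : i ∉ pendantNeighbors G L i :=
  fun h ↦ G.irrefl (mem_pendantNeighbors.1 h).1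

theorem notMem_pendantNeighbors_union_coreNeighbors :
    i ∉ pendantNeighbors G L i ∪ coreNeighbors G L i :=
  fun h ↦ G.irrefl (mem_pendantNeighbors_union_coreNeighbors.1 h)

theorem prod_min_labelScale {r t : ℝ} (ht : t ≤ 1)
    (hr : ∀ v ∈ coreNeighbors G L i, labelScale A L s v = r) :
    ∏ v ∈ pendantNeighbors G L i ∪ coreNeighbors G L i, min 1 (t / labelScale A L s v) =
      t ^ (pendantNeighbors G L i).card * min 1 (t / r) ^ (coreNeighbors G L i).card := by
  rw [Finset.prod_union (disjoint_pendantNeighbors_coreNeighbors i)]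
  congr 1 <;> refine Finset.prod_eq_pow_card fun v hv ↦ ?_
  · rw [labelScale_of_mem_pendantNeighbors hv, div_one, min_eq_right ht]
  · rw [hr v hv]

theorem lintegral_localWeight_of_mem (hG : IsBipartition G A) (hL : IsPendantSet G L)
    (hi : i ∈ A) (hs : 0 < s) {x : ℝ} (hx : 1 ≤ x) :
    ∫⁻ f, localWeight G A L (ENNReal.ofReal x) f i
        ∂Measure.pi (fun v ↦ uniformLaw (labelScale A L s v)) =
      ENNReal.ofReal (upperMean x s (pendantNeighbors G L i).card (coreNeighbors G L i).card) := by
  have scale_eq_one : labelScale A L s i = 1 := labelScale_of_mem (.inl hi)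
  have core_scale : ∀ v ∈ coreNeighbors G L i, labelScale A L s v = s := fun v hv ↦
    have hv' := mem_coreNeighbors.1 hv
    labelScale_of_notMem (not_or.2 ⟨(hG i v hv'.1).1 hi, hv'.2⟩)
  have pendant_mean := ofReal_mul_lintegral_prod_ite_gt (labelScale_pos hs)
    (notMem_pendantNeighbors (G := G) (L := L)) scale_eq_one.le
    (fun v ↦ labelScale_of_mem_pendantNeighbors) le_rfl
  have active_mean := ofReal_mul_lintegral_prod_ite_lt (labelScale_pos (A := A) (L := L) hs)
    (notMem_pendantNeighbors_union_coreNeighbors (G := G) (L := L) (i := i))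
  have integral_eq : ∫ t in (0 : ℝ)..1, ∏ v ∈ pendantNeighbors G L i ∪ coreNeighbors G L i,
        min 1 (t / labelScale A L s v) =
      ∫ t in (0 : ℝ)..1, t ^ (pendantNeighbors G L i).card *
        min 1 (t / s) ^ (coreNeighbors G L i).card :=
    intervalIntegral.integral_congr fun t ht ↦
      prod_min_labelScale (uIcc_of_le (zero_le_one (α := ℝ)) ▸ ht).2 core_scale
  simp only [scale_eq_one, ENNReal.ofReal_one, ENNReal.ofReal_zero, one_mul, zero_mul, add_zero]
    at pendant_mean active_mean
  have hx' : ENNReal.ofReal x = 1 + ENNReal.ofReal (x - 1) := by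
    rw [← ENNReal.ofReal_one, ← ENNReal.ofReal_add zero_le_one (sub_nonneg.2 hx)]
    ring_nf
  simp_rw [hx', localWeight_of_mem _ _ hG hL hi]
  rw [lintegral_add_left (measurable_prod_ite_gt _ _ _), lintegral_const_mul _
    (measurable_prod_ite_lt _ _), pendant_mean, active_mean, integral_eq,
    ← ENNReal.ofReal_mul (sub_nonneg.2 hx), ← ENNReal.ofReal_add, upperMean]
  · exact intervalIntegral.integral_nonneg zero_le_one fun t ht ↦ pow_nonneg ht.1 _
  · exact mul_nonneg (sub_nonneg.2 hx) (intervalIntegral.integral_nonneg zero_le_one fun t ht ↦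
      mul_nonneg (pow_nonneg ht.1 _) (pow_nonneg (le_min zero_le_one (div_nonneg ht.1 hs.le)) _))

theorem le_lintegral_localWeight_of_notMem (hG : IsBipartition G A) (hL : IsPendantSet G L)
    (hi : i ∉ A) (hiL : i ∉ L) (hs : 0 < s) (hs1 : s ≤ 1) {x : ℝ} (hx : 0 ≤ x) :
    ENNReal.ofReal (lowerMean x s (pendantNeighbors G L i).card (coreNeighbors G L i).card) ≤
      ENNReal.ofReal s * ∫⁻ f, localWeight G A L (ENNReal.ofReal x) f i
        ∂Measure.pi (fun v ↦ uniformLaw (labelScale A L s v)) := by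
  have scale_eq : labelScale A L s i = s := labelScale_of_notMem (not_or.2 ⟨hi, hiL⟩)
  have core_scale : ∀ v ∈ coreNeighbors G L i, labelScale A L s v = 1 := fun v hv ↦
    have hv' := (hG i v (mem_coreNeighbors.1 hv).1).not.1 hi
    labelScale_of_mem (.inl (not_not.1 hv'))
  have pendant_mean := ofReal_mul_lintegral_prod_ite_gt (labelScale_pos hs)
    (notMem_pendantNeighbors (G := G) (L := L)) (scale_eq.trans_le hs1)
    (fun v ↦ labelScale_of_mem_pendantNeighbors) hx
  have active_mean := ofReal_mul_lintegral_prod_ite_lt (labelScale_pos (A := A) (L := L) hs)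
    (notMem_pendantNeighbors_union_coreNeighbors (G := G) (L := L) (i := i))
  have integral_eq : ∫ t in (0 : ℝ)..s, ∏ v ∈ pendantNeighbors G L i ∪ coreNeighbors G L i,
        min 1 (t / labelScale A L s v) =
      ∫ t in (0 : ℝ)..s, t ^ ((pendantNeighbors G L i).card + (coreNeighbors G L i).card) :=
    intervalIntegral.integral_congr fun t ht ↦ by
      have ht1 : t ≤ 1 := (uIcc_of_le hs.le ▸ ht).2.trans hs1
      simp only [prod_min_labelScale ht1 core_scale, div_one, min_eq_right ht1, pow_add]
  rw [scale_eq] at pendant_mean active_mean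
  rw [integral_eq] at active_mean
  rw [lowerMean, ENNReal.ofReal_sub _
    (intervalIntegral.integral_nonneg hs.le fun t ht ↦ pow_nonneg ht.1 _), tsub_le_iff_right,
    ← pendant_mean, ← active_mean, ← mul_add,
    ← lintegral_add_left (measurable_localWeight G A L _ i)]
  simp_rw [localWeight_add_of_notMem _ _ hG hL hi]
  rfl

/-- For `i ∉ L`, the mean of the local weight of `i`, multiplied by the length of the label
interval of `i`. -/
noncomputable def localMean (G : SimpleGraph V) (A L : Set V) (x s : ℝ) (i : V) : ℝ :=
  if i ∈ A then upperMean x s (pendantNeighbors G L i).card (coreNeighbors G L i).card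
  else lowerMean x s (pendantNeighbors G L i).card (coreNeighbors G L i).card

theorem ofReal_localMean_le (hG : IsBipartition G A) (hL : IsPendantSet G L) (hiL : i ∉ L)
    (hs : 0 < s) (hs1 : s ≤ 1) {x : ℝ} (hx : 1 ≤ x) :
    ENNReal.ofReal (localMean G A L x s i) ≤
      ENNReal.ofReal (labelScale A L s i) * ∫⁻ f, localWeight G A L (ENNReal.ofReal x) f i
        ∂Measure.pi (fun v ↦ uniformLaw (labelScale A L s v)) := by
  by_cases hi : i ∈ A
  · rw [localMean, if_pos hi, labelScale_of_mem (.inl hi), ENNReal.ofReal_one, one_mul,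
      lintegral_localWeight_of_mem hG hL hi hs hx]
  · rw [localMean, if_neg hi, labelScale_of_notMem (not_or.2 ⟨hi, hiL⟩)]
    exact le_lintegral_localWeight_of_notMem hG hL hi hiL hs hs1 (zero_le_one.trans hx)

theorem prod_mul_lintegral_activityWeight_le_permTutte [DecidableEq V] {σ : V → ℝ}
    (hσ : ∀ v, 0 < σ v) (hσ1 : ∀ v, σ v ≤ 1) {x : ℝ} (hx : 0 ≤ x) :
    (∏ v, ENNReal.ofReal (σ v)) * ∫⁻ f, ∏ v, activityWeight G A (ENNReal.ofReal x) f v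
        ∂Measure.pi (fun v ↦ uniformLaw (σ v)) ≤
      ENNReal.ofReal (permTutte G A x 0) := by
  have (v : V) := isProbabilityMeasure_uniformLaw (hσ v)
  have := isProbabilityMeasure_uniformLaw one_pos
  have smul_le (v : V) : ENNReal.ofReal (σ v) • uniformLaw (σ v) ≤ uniformLaw 1 := by
    simpa using ofReal_smul_uniformLaw_le (hσ v) (hσ1 v)
  rw [ofReal_permTutte_zero_right G A hx (uniformLaw 1)]
  exact prod_mul_lintegral_pi_le _ _ _ smul_le
    (Finset.measurable_prod _ fun v _ ↦ measurable_activityWeight G A _ v)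

theorem prod_localMean_le_permTutte [DecidableEq V] (hG : IsBipartition G A)
    (hL : IsPendantSet G L) (hs : 0 < s) (hs1 : s ≤ 1) {x : ℝ} (hx : 1 ≤ x) :
    ∏ i with i ∉ L, ENNReal.ofReal (localMean G A L x s i) ≤
      ENNReal.ofReal (permTutte G A x 0) := by
  let σ := labelScale A L s
  let ν := fun v ↦ uniformLaw (σ v)
  have (v : V) : IsProbabilityMeasure (ν v) := isProbabilityMeasure_uniformLaw (labelScale_pos hs v)
  have prod_scale : ∏ i with i ∉ L, ENNReal.ofReal (σ i) = ∏ v, ENNReal.ofReal (σ v) :=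
    Finset.prod_subset (Finset.subset_univ _) fun v _ hv ↦ by
      have hvL : v ∈ L := by simpa using hv
      simp only [σ, labelScale_of_mem (.inr hvL), ENNReal.ofReal_one]
  set X := ENNReal.ofReal x
  calc ∏ i with i ∉ L, ENNReal.ofReal (localMean G A L x s i)
      ≤ ∏ i with i ∉ L,
          (ENNReal.ofReal (σ i) * ∫⁻ f, localWeight G A L X f i ∂Measure.pi ν) :=
        Finset.prod_le_prod' fun i hi ↦
          ofReal_localMean_le hG hL (by simpa using hi) hs hs1 hx
    _ = (∏ v, ENNReal.ofReal (σ v)) *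
          ∏ i with i ∉ L, ∫⁻ f, localWeight G A L X f i ∂Measure.pi ν := by
        rw [Finset.prod_mul_distrib, prod_scale]
    _ ≤ (∏ v, ENNReal.ofReal (σ v)) *
          ∫⁻ f, ∏ i with i ∉ L, localWeight G A L X f i ∂Measure.pi ν := by
        gcongr
        exact MonotoneAlong.prod_lintegral_le ν _
          (fun i _ ↦ monotoneAlong_localWeight hG (ENNReal.one_le_ofReal.2 hx) i)
          (measurable_localWeight G A L X)
    _ = (∏ v, ENNReal.ofReal (σ v)) * ∫⁻ f, ∏ v, activityWeight G A X f v ∂Measure.pi ν := by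
        simp_rw [localWeight, ← hL.prod_eq_prod_mul_prod]
    _ ≤ ENNReal.ofReal (permTutte G A x 0) :=
        prod_mul_lintegral_activityWeight_le_permTutte (labelScale_pos hs) (labelScale_le_one hs1)
          (zero_le_one.trans hx)

end LowerBound

section MeanFormulas

variable {s : ℝ} (k d : ℕ)

theorem integral_pow_mul_min_pow (hs : 0 < s) (hs1 : s ≤ 1) :
    ∫ t in (0 : ℝ)..1, t ^ k * min 1 (t / s) ^ d =
      (1 - s ^ (k + 1)) / (k + 1) + s ^ (k + 1) / (k + d + 1) := by
  have continuous_integrand : Continuous fun t : ℝ ↦ t ^ k * min 1 (t / s) ^ d := by fun_prop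
  have below : ∫ t in (0 : ℝ)..s, t ^ k * min 1 (t / s) ^ d = s ^ (k + 1) / (k + d + 1) := by
    calc ∫ t in (0 : ℝ)..s, t ^ k * min 1 (t / s) ^ d
        = ∫ t in (0 : ℝ)..s, t ^ (k + d) / s ^ d :=
          intervalIntegral.integral_congr fun t ht ↦ by
            have hts : t / s ≤ 1 := (div_le_one hs).2 (uIcc_of_le hs.le ▸ ht).2
            simp only [min_eq_right hts, div_pow, pow_add, mul_div_assoc]
      _ = s ^ (k + 1) / (k + d + 1) := by
          rw [intervalIntegral.integral_div, integral_pow]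
          push_cast
          field_simp
          ring
  have above : ∫ t in s..1, t ^ k * min 1 (t / s) ^ d = (1 - s ^ (k + 1)) / (k + 1) := by
    calc ∫ t in s..1, t ^ k * min 1 (t / s) ^ d
        = ∫ t in s..1, t ^ k :=
          intervalIntegral.integral_congr fun t ht ↦ by
            have hts : 1 ≤ t / s := (one_le_div hs).2 (uIcc_of_le hs1 ▸ ht).1
            simp only [min_eq_left hts, one_pow, mul_one]
      _ = (1 - s ^ (k + 1)) / (k + 1) := by rw [integral_pow, one_pow]
  rw [← intervalIntegral.integral_add_adjacent_intervals
    (continuous_integrand.intervalIntegrable 0 s) (continuous_integrand.intervalIntegrable s 1),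
    below, above, add_comm]

theorem integral_add_mul_one_sub_pow {x : ℝ} (hx : x ≠ 1) :
    ∫ t in (0 : ℝ)..s, (t + x * (1 - t)) ^ k =
      (x ^ (k + 1) - (x - (x - 1) * s) ^ (k + 1)) / ((x - 1) * (k + 1)) := by
  have hx' : x - 1 ≠ 0 := sub_ne_zero.2 hx
  have affine (t : ℝ) : t + x * (1 - t) = x - (x - 1) * t := by ring
  simp only [affine]
  rw [intervalIntegral.integral_comp_sub_mul (fun u ↦ u ^ k) hx', integral_pow, mul_zero, sub_zero,
    smul_eq_mul]
  field_simp

theorem upperMean_eq (x : ℝ) (hs : 0 < s) (hs1 : s ≤ 1) :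
    upperMean x s k d = 1 / (k + 1) +
      (x - 1) * ((1 - s ^ (k + 1)) / (k + 1) + s ^ (k + 1) / (k + d + 1)) := by
  rw [upperMean, integral_pow_mul_min_pow k d hs hs1, integral_pow, one_pow,
    zero_pow k.succ_ne_zero, sub_zero]

theorem lowerMean_eq {x : ℝ} (hx : x ≠ 1) :
    lowerMean x s k d = (x ^ (k + 1) - (x - (x - 1) * s) ^ (k + 1)) / ((x - 1) * (k + 1)) -
      s ^ (k + d + 1) / (k + d + 1) := by
  rw [lowerMean, integral_add_mul_one_sub_pow k hx, integral_pow, zero_pow (k + d).succ_ne_zero,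
    sub_zero, Nat.cast_add]

theorem upperMean_nonneg {x : ℝ} (hx : 1 ≤ x) (hs : 0 < s) (hs1 : s ≤ 1) :
    0 ≤ upperMean x s k d := by
  rw [upperMean_eq k d x hs hs1]
  have := sub_nonneg.2 (pow_le_one₀ (n := k + 1) hs.le hs1)
  have := sub_nonneg.2 hx
  positivity

end MeanFormulas

section NumericalBound

theorem le_upperMean_mul_lowerMean {x s : ℝ} {k : ℕ} (hx : 1 < x) (hs : 0 < s) (hs1 : s ≤ 1)
    (hk : x ≤ x ^ (k + 1) - (x - (x - 1) * s) ^ (k + 1)) (d : ℕ) :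
    (x - (x - 1) * s ^ (k + 1)) / (x - 1) *
        ((x ^ (k + 1) - (x - (x - 1) * s) ^ (k + 1)) / (k + 1) ^ 2) ≤
      upperMean x s k d * lowerMean x s k d := by
  have hpow : s ^ (k + d + 1) ≤ s ^ (k + 1) := pow_le_pow_of_le_one hs.le hs1 (by omega)
  have hupper := upperMean_nonneg k d hx.le hs hs1
  have hx' : 0 < x - 1 := sub_pos.2 hx
  rw [upperMean_eq k d x hs hs1] at hupper ⊢
  rw [lowerMean_eq k d hx.ne']
  set r := s ^ (k + 1)
  set D := x ^ (k + 1) - (x - (x - 1) * s) ^ (k + 1)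
  have hinv : (1 : ℝ) / (k + d + 1) ≤ 1 / (k + 1) := by
    gcongr
    linarith [d.cast_nonneg (α := ℝ)]
  have hrest : 0 ≤ r / (k + d + 1) * ((D - x) / (k + 1) +
      (x - 1) * r * (1 / (k + 1) - 1 / (k + d + 1))) :=
    mul_nonneg (by positivity) (add_nonneg (div_nonneg (sub_nonneg.2 hk) (by positivity))
      (mul_nonneg (by positivity) (sub_nonneg.2 hinv)))
  calc (x - (x - 1) * r) / (x - 1) * (D / (k + 1) ^ 2)
      ≤ (x - (x - 1) * r) / (x - 1) * (D / (k + 1) ^ 2) + r / (k + d + 1) * ((D - x) / (k + 1) +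
          (x - 1) * r * (1 / (k + 1) - 1 / (k + d + 1))) := le_add_of_nonneg_right hrest
    _ = (1 / (k + 1) + (x - 1) * ((1 - r) / (k + 1) + r / (k + d + 1))) *
          (D / ((x - 1) * (k + 1)) - r / (k + d + 1)) := by
        field_simp
        ring
    _ ≤ (1 / (k + 1) + (x - 1) * ((1 - r) / (k + 1) + r / (k + d + 1))) *
          (D / ((x - 1) * (k + 1)) - s ^ (k + d + 1) / (k + d + 1)) := by
        gcongr

theorem add_one_div_two_sq_le_pow {x : ℝ} (hx : 9 / 4 ≤ x) (n : ℕ) :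
    (((n : ℝ) + 2) / 2) ^ 2 ≤ x ^ n := by
  induction n with
  | zero => norm_num
  | succ n ih =>
    calc (((n + 1 : ℕ) + 2 : ℝ) / 2) ^ 2 ≤ ((n + 2 : ℝ) / 2) ^ 2 * (9 / 4) := by
          push_cast
          nlinarith [n.cast_nonneg (α := ℝ)]
      _ ≤ x ^ n * x := by gcongr
      _ = x ^ (n + 1) := (pow_succ x n).symm

theorem mul_pow_le_pow_add_sub_pow_add {a b : ℝ} (ha : 0 ≤ a) (hab : a ≤ b) (n m : ℕ) :
    b ^ n * (b ^ m - a ^ m) ≤ b ^ (n + m) - a ^ (n + m) := by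
  have : a ^ n * a ^ m ≤ b ^ n * a ^ m := by gcongr
  rw [pow_add, pow_add]
  linarith

theorem one_le_upperMean_mul_lowerMean_zero {d : ℕ} (hd : 2 ≤ d) :
    1 ≤ upperMean (471 / 200) (7 / 8) 0 d * lowerMean (471 / 200) (7 / 8) 0 d := by
  have hv : (1 : ℝ) / (d + 1) ≤ 1 / 3 := by
    gcongr
    norm_cast
    omega
  have hv0 : (0 : ℝ) < 1 / (d + 1) := by positivity
  have hpow : (7 / 8 : ℝ) ^ (d + 1) ≤ (7 / 8) ^ 3 :=
    pow_le_pow_of_le_one (by norm_num) (by norm_num) (by omega)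
  have hupper : upperMean (471 / 200) (7 / 8) 0 d =
      1 + 271 / 200 * (1 / 8 + 7 / 8 * (1 / (d + 1))) := by
    rw [upperMean_eq 0 d _ (by norm_num) (by norm_num), Nat.cast_zero]
    ring
  have hlower : lowerMean (471 / 200) (7 / 8) 0 d =
      7 / 8 - (7 / 8) ^ (d + 1) * (1 / (d + 1)) := by
    rw [lowerMean_eq 0 d (by norm_num), Nat.cast_zero, zero_add]
    ring
  rw [hupper, hlower]
  set v : ℝ := 1 / (d + 1)
  calc (1 : ℝ) ≤ (1 + 271 / 200 * (1 / 8 + 7 / 8 * v)) * (7 / 8 - (7 / 8) ^ 3 * v) := by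
        nlinarith
    _ ≤ (1 + 271 / 200 * (1 / 8 + 7 / 8 * v)) * (7 / 8 - (7 / 8) ^ (d + 1) * v) := by gcongr

theorem one_le_upperMean_mul_lowerMean_succ (n d : ℕ) :
    1 ≤ upperMean (471 / 200) (7 / 8) (n + 1) d * lowerMean (471 / 200) (7 / 8) (n + 1) d := by
  set D : ℝ := (471 / 200) ^ (n + 1 + 1) - (471 / 200 - (471 / 200 - 1) * (7 / 8)) ^ (n + 1 + 1)
  have hn : (((n : ℝ) + 2) / 2) ^ 2 ≤ (471 / 200) ^ n := add_one_div_two_sq_le_pow (by norm_num) n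
  have hDn : (((n : ℝ) + 2) / 2) ^ 2 * 4.178 ≤ D :=
    calc (((n : ℝ) + 2) / 2) ^ 2 * 4.178
        ≤ (471 / 200) ^ n * ((471 / 200) ^ 2 - (471 / 200 - (471 / 200 - 1) * (7 / 8)) ^ 2) := by
          gcongr
          norm_num
      _ ≤ D := mul_pow_le_pow_add_sub_pow_add (by norm_num) (by norm_num) n 2
  have hDx : 471 / 200 ≤ D := by nlinarith [n.cast_nonneg (α := ℝ)]
  have hquot : 4.178 / 4 ≤ D / ((n + 1 : ℕ) + 1) ^ 2 := by
    rw [le_div_iff₀ (by positivity)]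
    push_cast
    linarith
  have hr : (7 / 8 : ℝ) ^ (n + 1 + 1) ≤ (7 / 8) ^ 2 :=
    pow_le_pow_of_le_one (by norm_num) (by norm_num) (by omega)
  calc (1 : ℝ)
      ≤ (471 / 200 - (471 / 200 - 1) * (7 / 8) ^ 2) / (471 / 200 - 1) * (4.178 / 4) := by norm_num
    _ ≤ (471 / 200 - (471 / 200 - 1) * (7 / 8) ^ (n + 1 + 1)) / (471 / 200 - 1) *
          (D / ((n + 1 : ℕ) + 1) ^ 2) := by
        gcongr ?_ / _ * ?_
        · exact div_nonneg (by linarith) (by norm_num)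
        · linarith
    _ ≤ upperMean (471 / 200) (7 / 8) (n + 1) d * lowerMean (471 / 200) (7 / 8) (n + 1) d :=
        le_upperMean_mul_lowerMean (by norm_num) (by norm_num) (by norm_num) hDx d

theorem one_le_upperMean_mul_lowerMean {k d : ℕ} (h : 1 ≤ k ∨ 2 ≤ d) :
    1 ≤ upperMean (471 / 200) (7 / 8) k d * lowerMean (471 / 200) (7 / 8) k d := by
  cases k with
  | zero => exact one_le_upperMean_mul_lowerMean_zero (h.resolve_left (by simp))
  | succ n => exact one_le_upperMean_mul_lowerMean_succ n d

end NumericalBound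

section MainBound

theorem isBipartition_compl {V : Type*} {G : SimpleGraph V} {A : Set V} (hG : IsBipartition G A) :
    IsBipartition G Aᶜ :=
  fun u v huv ↦ not_congr (hG u v huv)

variable {V : Type*} [Fintype V] {G : SimpleGraph V} {A L : Set V}

theorem one_le_ofReal_localMean_mul_ofReal_localMean_compl {i : V}
    (h : 1 ≤ (pendantNeighbors G L i).card ∨ 2 ≤ (coreNeighbors G L i).card) :
    1 ≤ ENNReal.ofReal (localMean G A L (471 / 200) (7 / 8) i) *
      ENNReal.ofReal (localMean G Aᶜ L (471 / 200) (7 / 8) i) := by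
  have one_le := ENNReal.one_le_ofReal.2 (one_le_upperMean_mul_lowerMean h)
  rw [ENNReal.ofReal_mul
    (upperMean_nonneg _ _ (by norm_num) (by norm_num) (by norm_num))] at one_le
  by_cases hi : i ∈ A
  · simpa only [localMean, hi, mem_compl_iff, not_true_eq_false, if_true, if_false] using one_le
  · simpa only [localMean, hi, mem_compl_iff, not_false_eq_true, if_true, if_false, mul_comm]
      using one_le

theorem one_le_permTutte_mul_permTutte_compl [DecidableEq V] (hG : IsBipartition G A)
    (hdeg : ∀ v, ∃ w, G.Adj v w) :
    1 ≤ permTutte G A (471 / 200) 0 * permTutte G Aᶜ (471 / 200) 0 := by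
  obtain ⟨L, hL, hL_card⟩ := exists_isPendantSet hdeg
  have prod_le {B : Set V} (hB : IsBipartition G B) :
      ∏ i with i ∉ L, ENNReal.ofReal (localMean G B L (471 / 200) (7 / 8) i) ≤
        ENNReal.ofReal (permTutte G B (471 / 200) 0) :=
    prod_localMean_le_permTutte hB hL (by norm_num) (by norm_num) (by norm_num)
  rw [← ENNReal.one_le_ofReal, ENNReal.ofReal_mul (permTutte_nonneg G A (by norm_num) le_rfl)]
  calc 1 ≤ ∏ i with i ∉ L, (ENNReal.ofReal (localMean G A L (471 / 200) (7 / 8) i) *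
          ENNReal.ofReal (localMean G Aᶜ L (471 / 200) (7 / 8) i)) :=
        Finset.one_le_prod' fun i hi ↦ one_le_ofReal_localMean_mul_ofReal_localMean_compl
          (hL_card i ((Finset.mem_filter_univ i).1 hi))
    _ ≤ ENNReal.ofReal (permTutte G A (471 / 200) 0) *
          ENNReal.ofReal (permTutte G Aᶜ (471 / 200) 0) := by
        rw [Finset.prod_mul_distrib]
        exact mul_le_mul' (prod_le hG) (prod_le (isBipartition_compl hG))

end MainBound

end

/-- For every real `x ≥ 2.355`, every finite bipartite graph `H` with minimum degree at
least `1` satisfies `T̃_H(x,0) · T̃_H(0,x) ≥ 1`. -/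
theorem permTutte_ge_one_of_ge
    {V : Type*} [Fintype V] [DecidableEq V] (G : SimpleGraph V) [DecidableRel G.Adj]
    (A : Set V) (hbip : IsBipartition G A)
    (hdeg : ∀ v : V, 1 ≤ G.degree v)
    (x : ℝ) (hx : 2.355 ≤ x) :
    permTutte G A x 0 * permTutte G A 0 x ≥ 1 := by
  have exists_adj (v : V) : ∃ w, G.Adj v w := (G.degree_pos_iff_exists_adj v).1 (hdeg v)
  have permTutte_mono (B : Set V) : permTutte G B (471 / 200) 0 ≤ permTutte G B x 0 :=
    permTutte_le_permTutte G B (by norm_num) le_rfl (by linarith)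
  calc 1 ≤ permTutte G A (471 / 200) 0 * permTutte G Aᶜ (471 / 200) 0 :=
        one_le_permTutte_mul_permTutte_compl hbip exists_adj
    _ ≤ permTutte G A x 0 * permTutte G Aᶜ x 0 :=
        mul_le_mul (permTutte_mono A) (permTutte_mono Aᶜ)
          (permTutte_nonneg G Aᶜ (by norm_num) le_rfl) (permTutte_nonneg G A (by linarith) le_rfl)
    _ = permTutte G A x 0 * permTutte G A 0 x := by rw [permTutte_zero_left]
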